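/- arXiv:2501.02298 — 3 statements merged into one kernel-verified Lean document; each statement's English description precedes it below -/
import Mathlib

section
/- Let d ≥ 1, n ≥ 1, σ > 0, μ_1,…,μ_n ∈ ℝ^d and β_1,…,β_n ∈ [0,1] with ∑_{i=1}^n β_i = 1, and let p_n(x) := ∑_{i=1}^n β_i (2πσ²)^{-d/2} exp(−‖x−μ_i‖²/(2σ²)). Set α := 1/σ² and M := (2n ∑_{i=1}^n ‖μ_i‖/σ²)². Then the score function ∇log p_n is Lipschitz with constant α + M: for all x, y ∈ ℝ^d, ‖∇log p_n(x) − ∇log p_n(y)‖ ≤ (α + M)‖x−y‖. -/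
/-!
Completing the square gives `p x = exp (-‖x‖² / (2σ²)) * G x` with `G x = ∑ cᵢ exp ⟪νᵢ, x⟫`,
`νᵢ = μᵢ / σ²` and `cᵢ ≥ 0` not all zero. Hence the score is `-x / σ² + m x`, where
`m = ∇ log G` is the average of the `νᵢ` with the weights `cᵢ exp ⟪νᵢ, x⟫ / G x`
(`mixtureScore_hasGradientAt`). The first term is `α`-Lipschitz. The derivative of `m` along a
direction `v` is the average of `⟪νᵢ, v⟫ νᵢ` minus the product of the averages of `⟪νᵢ, v⟫` and
of `νᵢ`, so its norm is at most `2R²‖v‖` as soon as `‖νᵢ‖ ≤ R` for all `i`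
(`weightedMean_lipschitz`). Taking `R = ∑ ‖μᵢ‖ / σ²` gives `2R² ≤ (2nR)² = M`.
-/

section
variable {E : Type*} [NormedAddCommGroup E] [InnerProductSpace ℝ E] {n : ℕ}

/-- The partition function `∑ cᵢ exp ⟪νᵢ, x⟫`. -/
noncomputable def partitionFn (c : Fin n → ℝ) (ν : Fin n → E) (x : E) : ℝ :=
  ∑ i, c i * Real.exp (inner ℝ (ν i) x)

/-- The mean of the `νᵢ` under the weights proportional to `cᵢ exp ⟪νᵢ, x⟫`. -/
noncomputable def weightedMean (c : Fin n → ℝ) (ν : Fin n → E) (x : E) : E :=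
  (partitionFn c ν x)⁻¹ • ∑ i, (c i * Real.exp (inner ℝ (ν i) x)) • ν i

theorem partitionFn_pos (c : Fin n → ℝ) (ν : Fin n → E) (hc : ∀ i, 0 ≤ c i)
    (hc' : ∃ i, 0 < c i) (x : E) : 0 < partitionFn c ν x := by
  obtain ⟨i, hi⟩ := hc'
  exact Finset.sum_pos' (fun j _ => mul_nonneg (hc j) (Real.exp_pos _).le)
    ⟨i, Finset.mem_univ i, mul_pos hi (Real.exp_pos _)⟩

theorem norm_weighted_sum_le {F : Type*} [NormedAddCommGroup F] [NormedSpace ℝ F]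
    (c : Fin n → ℝ) (ν : Fin n → E) (hc : ∀ i, 0 ≤ c i) (x : E) (b : Fin n → F) (K : ℝ)
    (hb : ∀ i, ‖b i‖ ≤ K) :
    ‖∑ i, (c i * Real.exp (inner ℝ (ν i) x)) • b i‖ ≤ partitionFn c ν x * K := by
  rw [partitionFn, Finset.sum_mul]
  refine norm_sum_le_of_le _ fun i _ => ?_
  have h : 0 ≤ c i * Real.exp (inner ℝ (ν i) x) := mul_nonneg (hc i) (Real.exp_pos _).le
  rw [norm_smul, Real.norm_of_nonneg h]
  exact mul_le_mul_of_nonneg_left (hb i) h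

/-- The derivative of the weighted mean is a covariance, bounded here by the crude `2R²`. -/
theorem weightedMean_lipschitz (c : Fin n → ℝ) (ν : Fin n → E) (hc : ∀ i, 0 ≤ c i)
    (hc' : ∃ i, 0 < c i) (R : ℝ) (hR : ∀ i, ‖ν i‖ ≤ R) (x y : E) :
    ‖weightedMean c ν x - weightedMean c ν y‖ ≤ 2 * R ^ 2 * ‖x - y‖ := by
  have hR0 : 0 ≤ R := let ⟨i, _⟩ := hc'; (norm_nonneg _).trans (hR i)
  set v := x - y with hv
  have he : ∀ (t : ℝ) (i : Fin n),
      HasDerivAt (fun t : ℝ => c i * Real.exp (inner ℝ (ν i) (y + t • v)))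
        (c i * Real.exp (inner ℝ (ν i) (y + t • v)) * inner ℝ (ν i) v) t := by
    intro t i
    have h1 : HasDerivAt (fun t : ℝ => inner ℝ (ν i) (y + t • v)) (inner ℝ (ν i) v) t := by
      simp only [inner_add_right, inner_smul_right]
      simpa using ((hasDerivAt_id t).mul_const (inner ℝ (ν i) v)).const_add (inner ℝ (ν i) y)
    simpa [mul_assoc] using h1.exp.const_mul (c i)
  have hG : ∀ t : ℝ, HasDerivAt (fun t : ℝ => partitionFn c ν (y + t • v))
      (∑ i, (c i * Real.exp (inner ℝ (ν i) (y + t • v))) • inner ℝ (ν i) v) t := fun t =>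
    HasDerivAt.fun_sum fun i _ => he t i
  have hN : ∀ t : ℝ, HasDerivAt
      (fun t : ℝ => ∑ i, (c i * Real.exp (inner ℝ (ν i) (y + t • v))) • ν i)
      (∑ i, (c i * Real.exp (inner ℝ (ν i) (y + t • v))) • (inner ℝ (ν i) v • ν i)) t := by
    intro t
    refine HasDerivAt.fun_sum fun i _ => ?_
    simpa [smul_smul] using (he t i).smul_const (ν i)
  have hpos := fun t : ℝ => partitionFn_pos c ν hc hc' (y + t • v)
  have hf := fun t : ℝ => ((hG t).fun_inv (hpos t).ne').fun_smul (hN t)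
  have key := norm_image_sub_le_of_norm_deriv_le_segment_01'
    (f := fun t : ℝ => weightedMean c ν (y + t • v)) (C := 2 * R ^ 2 * ‖v‖)
    (fun t _ => (hf t).hasDerivWithinAt) ?_
  · simpa [hv] using key
  · intro t _
    have hip : ∀ i, ‖inner ℝ (ν i) v‖ ≤ R * ‖v‖ := fun i =>
      (norm_inner_le_norm _ _).trans (mul_le_mul_of_nonneg_right (hR i) (norm_nonneg _))
    have b1 := norm_weighted_sum_le c ν hc (y + t • v) (fun i => inner ℝ (ν i) v • ν i)
      (R * ‖v‖ * R) fun i => by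
        rw [norm_smul]
        exact mul_le_mul (hip i) (hR i) (norm_nonneg _) (by positivity)
    have b2 := norm_weighted_sum_le c ν hc (y + t • v) (fun i => inner ℝ (ν i) v) _ hip
    have b3 := norm_weighted_sum_le c ν hc (y + t • v) ν R hR
    have hg := hpos t
    set g := partitionFn c ν (y + t • v)
    refine (norm_add_le _ _).trans ?_
    rw [norm_smul, norm_smul, norm_div, norm_neg, norm_inv, norm_pow, Real.norm_of_nonneg hg.le]
    calc _ ≤ g⁻¹ * (g * (R * ‖v‖ * R)) + (g * (R * ‖v‖)) / g ^ 2 * (g * R) := by gcongr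
      _ = 2 * R ^ 2 * ‖v‖ := by field_simp; ring

/-- The score of `exp (-(α / 2)‖z‖²) * ∑ cᵢ exp ⟪νᵢ, z⟫` is a linear part plus the weighted mean. -/
theorem mixtureScore_hasGradientAt [CompleteSpace E] (c : Fin n → ℝ) (ν : Fin n → E)
    (hc : ∀ i, 0 ≤ c i) (hc' : ∃ i, 0 < c i) (α : ℝ) (x : E) :
    HasGradientAt (fun z => Real.log (Real.exp (-(α / 2) * ‖z‖ ^ 2) * partitionFn c ν z))
      (-α • x + weightedMean c ν x) x := by
  have hpos := partitionFn_pos c ν hc hc'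
  have hlog : (fun z => Real.log (Real.exp (-(α / 2) * ‖z‖ ^ 2) * partitionFn c ν z)) =
      fun z => -(α / 2) * ‖z‖ ^ 2 + Real.log (partitionFn c ν z) := by
    funext z
    rw [Real.log_mul (Real.exp_pos _).ne' (hpos z).ne', Real.log_exp]
  rw [hlog, hasGradientAt_iff_hasFDerivAt]
  have hq : HasFDerivAt (fun z : E => -(α / 2) * ‖z‖ ^ 2) _ x :=
    (hasStrictFDerivAt_norm_sq x).hasFDerivAt.const_mul (-(α / 2))
  have hG : HasFDerivAt (partitionFn c ν)
      (∑ i, c i • (Real.exp (inner ℝ (ν i) x) • innerSL ℝ (ν i))) x :=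
    HasFDerivAt.fun_sum fun i _ => ((innerSL ℝ (ν i)).hasFDerivAt.exp).const_mul (c i)
  refine (hq.add (hG.log (hpos x).ne')).congr_fderiv ?_
  ext w
  simp [weightedMean, mul_assoc]
  ring

end

open Real MeasureTheory
open scoped BigOperators

/-- the score function of a Gaussian mixture is Lipschitz with
constant `α + M` where `α = 1/σ²` and `M = (2n ∑ ‖μᵢ‖/σ²)²`. -/
theorem gaussian_mixture_score_lipschitz
    (d n : ℕ) (hd : 1 ≤ d) (hn : 1 ≤ n) (σ : ℝ) (hσ : 0 < σ)
    (μ : Fin n → EuclideanSpace ℝ (Fin d)) (β : Fin n → ℝ)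
    (hβ : ∀ i, β i ∈ Set.Icc (0 : ℝ) 1) (hsum : ∑ i, β i = 1)
    (p : EuclideanSpace ℝ (Fin d) → ℝ)
    (hp : ∀ x, p x = ∑ i, β i * (2 * π * σ ^ 2) ^ (-(d : ℝ) / 2) *
        Real.exp (-‖x - μ i‖ ^ 2 / (2 * σ ^ 2)))
    (α M : ℝ) (hα : α = 1 / σ ^ 2)
    (hM : M = (2 * n * ∑ i, ‖μ i‖ / σ ^ 2) ^ 2) :
    ∀ x y : EuclideanSpace ℝ (Fin d),
      ‖gradient (fun z => Real.log (p z)) x - gradient (fun z => Real.log (p z)) y‖ ≤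
        (α + M) * ‖x - y‖ := by
  intro x y
  have hα0 : 0 < α := by rw [hα]; positivity
  set ν : Fin n → EuclideanSpace ℝ (Fin d) := fun i => α • μ i with hν
  set c : Fin n → ℝ := fun i => β i * (2 * π * σ ^ 2) ^ (-(d : ℝ) / 2) *
    Real.exp (-(α / 2) * ‖μ i‖ ^ 2) with hcdef
  have hC : 0 < (2 * π * σ ^ 2) ^ (-(d : ℝ) / 2) := by positivity
  have hc : ∀ i, 0 ≤ c i := fun i =>
    mul_nonneg (mul_nonneg (hβ i).1 hC.le) (Real.exp_pos _).le
  have hc' : ∃ i, 0 < c i := by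
    obtain ⟨i, -, hi⟩ := Finset.exists_lt_of_sum_lt (s := Finset.univ) (f := fun _ : Fin n => (0 : ℝ))
      (g := β) (by simp [hsum])
    exact ⟨i, mul_pos (mul_pos hi hC) (Real.exp_pos _)⟩
  have hpeq : p = fun z => Real.exp (-(α / 2) * ‖z‖ ^ 2) * partitionFn c ν z := by
    funext z
    rw [hp, partitionFn, Finset.mul_sum]
    refine Finset.sum_congr rfl fun i _ => ?_
    -- completing the square in the exponent
    have hexp : -‖z - μ i‖ ^ 2 / (2 * σ ^ 2) =
        -(α / 2) * ‖z‖ ^ 2 + -(α / 2) * ‖μ i‖ ^ 2 + inner ℝ (ν i) z := by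
      rw [norm_sub_sq_real, hν, inner_smul_left, real_inner_comm, hα]
      simp
      field_simp
      ring
    rw [hexp, Real.exp_add, Real.exp_add]
    simp only [hcdef]
    ring
  have hgrad : ∀ z, gradient (fun z => Real.log (p z)) z = -α • z + weightedMean c ν z :=
    fun z => by
      rw [hpeq]
      exact (mixtureScore_hasGradientAt c ν hc hc' α z).gradient
  set R := ∑ i, ‖μ i‖ / σ ^ 2 with hRdef
  have hR : ∀ i, ‖ν i‖ ≤ R := fun i => by
    have h1 : ‖ν i‖ = ‖μ i‖ / σ ^ 2 := by
      rw [hν, norm_smul, Real.norm_of_nonneg hα0.le, hα]; ring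
    rw [h1]
    exact Finset.single_le_sum (f := fun i => ‖μ i‖ / σ ^ 2) (fun j _ => by positivity)
      (Finset.mem_univ i)
  have hRM : 2 * R ^ 2 ≤ M := by
    have hn' : (1 : ℝ) ≤ n := by exact_mod_cast hn
    have hn2 : (1 : ℝ) ≤ (n : ℝ) ^ 2 := one_le_pow₀ hn'
    rw [hM]
    nlinarith [sq_nonneg R, mul_le_mul_of_nonneg_right hn2 (sq_nonneg R)]
  rw [hgrad, hgrad]
  calc ‖-α • x + weightedMean c ν x - (-α • y + weightedMean c ν y)‖
      = ‖-α • (x - y) + (weightedMean c ν x - weightedMean c ν y)‖ := by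
        congr 1; rw [smul_sub]; abel
    _ ≤ α * ‖x - y‖ + 2 * R ^ 2 * ‖x - y‖ := by
        refine (norm_add_le _ _).trans (add_le_add ?_ (weightedMean_lipschitz c ν hc hc' R hR x y))
        rw [norm_smul, norm_neg, Real.norm_of_nonneg hα0.le]
    _ ≤ (α + M) * ‖x - y‖ := by
        rw [← add_mul]; gcongr
end

section
/- For α, M > 0 define C_t := α/(α+(1−α)e^{−2t}) − M e^{−2t}/(α+(1−α)e^{−2t})² − 1 for t ≥ 0. If α − M ≥ 0 then C_t + 1 ≥ 0 for all t ≥ 0. If α − M < 0, then for every t ≥ (1/2)·log((α² + M − α)/α²) one has C_t + 1 ≥ 0. -/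
/-!
Put `s = e^{-2t}`. Over a common denominator, `C_t + 1` is
`α² - (α² + M - α) s` divided by a square, so it suffices that `(α² + M - α) s ≤ α²`.
If `M ≤ α` this follows from `0 < s ≤ 1`; if `M > α`, then `α² + M - α > 0` and the
inequality is equivalent to `t ≥ (1/2) log ((α² + M - α) / α²)`.
-/

open Real

/-- With `s = e^{-2t}` and `D = α + (1 - α) s`, the sum `C_t + 1` equals
`(α² - (α² + M - α) s) / D²`, so its sign is that of a numerator affine in `s`. -/
lemma regime_nonneg (α M s : ℝ) (h : (α ^ 2 + M - α) * s ≤ α ^ 2) :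
    0 ≤ α / (α + (1 - α) * s) - M * s / (α + (1 - α) * s) ^ 2 - 1 + 1 := by
  -- If the denominator vanishes, both quotients are `0` by convention.
  by_cases hD : α + (1 - α) * s = 0
  · simp [hD]
  · have e : α / (α + (1 - α) * s) - M * s / (α + (1 - α) * s) ^ 2 - 1 + 1
        = (α ^ 2 - (α ^ 2 + M - α) * s) / (α + (1 - α) * s) ^ 2 := by
      field_simp
      ring
    rw [e]
    exact div_nonneg (by linarith) (sq_nonneg _)

/-- regime switching for log-concavity along the OU flow: if `α − M ≥ 0`
then `C_t + 1 ≥ 0` for all `t ≥ 0`; if `α − M < 0` then `C_t + 1 ≥ 0` for all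
`t ≥ (1/2)·log((α² + M − α)/α²)`. -/
theorem log_concavity_regime_switch
    (α M : ℝ) (hα : 0 < α) (hM : 0 < M)
    (C : ℝ → ℝ)
    (hC : ∀ t, C t = α / (α + (1 - α) * Real.exp (-2 * t)) -
        M * Real.exp (-2 * t) / (α + (1 - α) * Real.exp (-2 * t)) ^ 2 - 1) :
    (α - M ≥ 0 → ∀ t ≥ (0 : ℝ), C t + 1 ≥ 0) ∧
    (α - M < 0 → ∀ t ≥ (1 / 2) * Real.log ((α ^ 2 + M - α) / α ^ 2), C t + 1 ≥ 0) := by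
  refine ⟨fun h t ht => ?_, fun h t ht => ?_⟩
  · rw [hC]
    apply regime_nonneg
    have hs : Real.exp (-2 * t) ≤ 1 := Real.exp_le_one_iff.2 (by linarith)
    have hs0 := Real.exp_pos (-2 * t)
    nlinarith [mul_nonneg h hs0.le, mul_nonneg (sq_nonneg α) (sub_nonneg.2 hs)]
  · rw [hC]
    apply regime_nonneg
    have hK : 0 < α ^ 2 + M - α := by nlinarith [sq_nonneg α]
    have hq : 0 < (α ^ 2 + M - α) / α ^ 2 := by positivity
    -- The threshold on `t` says exactly that `(α² + M - α) / α² ≤ e^{2t}`.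
    have h1 : (α ^ 2 + M - α) / α ^ 2 ≤ Real.exp (2 * t) :=
      (Real.log_le_iff_le_exp hq).1 (by linarith)
    rw [div_le_iff₀ (by positivity)] at h1
    have h2 : Real.exp (2 * t) * Real.exp (-2 * t) = 1 := by
      rw [← Real.exp_add]
      simp
    calc (α ^ 2 + M - α) * Real.exp (-2 * t)
        ≤ Real.exp (2 * t) * α ^ 2 * Real.exp (-2 * t) :=
          mul_le_mul_of_nonneg_right h1 (Real.exp_pos _).le
      _ = α ^ 2 := by linear_combination α ^ 2 * h2
end

section
/- For α, M > 0 and ρ ∈ [0,1) define C_t := α/(α+(1−α)e^{−2t}) − M e^{−2t}/(α+(1−α)e^{−2t})² − 1, A := (M + ρα(1−α))/((1−ρ)α²), and B := (1+ρ)(1−α)²/((1−ρ)α²). Then for every t ≥ (1/2)·log( A + √(B + A²) ), one has 2 C_t + 1 ≥ ρ. -/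
/-! With `y = e^{-2t}` and `D = α + (1 - α) y`, the claim is `2 α D - 2 M y ≥ (1 + ρ) D²`.
Dividing by `(1 - ρ) α² y²`, this reads `x² - 2 A x - B ≥ 0` for `x = e^{2t}`, and
`A + √(B + A²)` is the larger root of that quadratic. Since `M y > 0`, the polynomial inequality
also rules out `D = 0`, which could otherwise occur for `α > 1` and `t < 0`. -/

open Real

/-- onset of the contractive regime: with
`A = (M + ρα(1−α))/((1−ρ)α²)` and `B = (1+ρ)(1−α)²/((1−ρ)α²)`, for every
`t ≥ (1/2)·log(A + √(B + A²))` one has `2C_t + 1 ≥ ρ`. -/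
theorem contractivity_onset
    (α M ρ : ℝ) (hα : 0 < α) (hM : 0 < M) (hρ : ρ ∈ Set.Ico (0 : ℝ) 1)
    (C : ℝ → ℝ)
    (hC : ∀ t, C t = α / (α + (1 - α) * Real.exp (-2 * t)) -
        M * Real.exp (-2 * t) / (α + (1 - α) * Real.exp (-2 * t)) ^ 2 - 1)
    (A B : ℝ)
    (hA : A = (M + ρ * α * (1 - α)) / ((1 - ρ) * α ^ 2))
    (hB : B = (1 + ρ) * (1 - α) ^ 2 / ((1 - ρ) * α ^ 2)) :
    ∀ t ≥ (1 / 2) * Real.log (A + Real.sqrt (B + A ^ 2)), 2 * C t + 1 ≥ ρ := by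
  intro t ht
  obtain ⟨hρ0, hρ1⟩ := hρ
  have hρ' : 0 < 1 - ρ := by linarith
  have hK : 0 < (1 - ρ) * α ^ 2 := by positivity
  have hAK : A * ((1 - ρ) * α ^ 2) = M + ρ * α * (1 - α) := by
    rw [hA]; exact div_mul_cancel₀ _ hK.ne'
  have hBK : B * ((1 - ρ) * α ^ 2) = (1 + ρ) * (1 - α) ^ 2 := by
    rw [hB]; exact div_mul_cancel₀ _ hK.ne'
  have hB0 : 0 ≤ B := by rw [hB]; positivity
  -- The argument of the logarithm is positive: `B > 0` unless `α = 1`, and then `A > 0`.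
  have hpos : 0 < A + √(B + A ^ 2) := by
    by_cases h1 : α = 1
    · have : 0 < A := by
        rw [hA, h1]
        have : 0 < M + ρ * 1 * (1 - 1) := by linarith
        positivity
      positivity
    · have h2 : 1 - α ≠ 0 := fun h => h1 (by linarith)
      have : 0 < B := by rw [hB]; positivity
      have h3 : |A| < √(B + A ^ 2) := by
        rw [← Real.sqrt_sq_eq_abs]
        exact Real.sqrt_lt_sqrt (sq_nonneg A) (by linarith)
      linarith [neg_abs_le A]
  have hx : A + √(B + A ^ 2) ≤ Real.exp (2 * t) := by
    rw [← Real.log_le_iff_le_exp hpos]; linarith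
  have hxy : Real.exp (2 * t) * Real.exp (-2 * t) = 1 := by
    rw [← Real.exp_add]; simp
  have hy := Real.exp_pos (-2 * t)
  rw [hC t]
  set x := Real.exp (2 * t)
  set y := Real.exp (-2 * t)
  have hq : 0 ≤ x ^ 2 - 2 * A * x - B := by
    have hs := Real.sq_sqrt (show 0 ≤ B + A ^ 2 by positivity)
    have hs0 := Real.sqrt_nonneg (B + A ^ 2)
    nlinarith [pow_le_pow_left₀ hs0 (show √(B + A ^ 2) ≤ x - A by linarith) 2]
  have hq' : 0 ≤ 1 - 2 * A * y - B * y ^ 2 := by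
    have h : (x ^ 2 - 2 * A * x - B) * y ^ 2 = 1 - 2 * A * y - B * y ^ 2 := by
      linear_combination (x * y + 1 - 2 * A * y) * hxy
    rw [← h]; positivity
  have key : (1 + ρ) * (α + (1 - α) * y) ^ 2 ≤ 2 * α * (α + (1 - α) * y) - 2 * M * y := by
    have h := mul_nonneg hK.le hq'
    have h' : (1 - ρ) * α ^ 2 * (1 - 2 * A * y - B * y ^ 2) =
        2 * α * (α + (1 - α) * y) - 2 * M * y - (1 + ρ) * (α + (1 - α) * y) ^ 2 := by
      linear_combination (-2 * y) * hAK - y ^ 2 * hBK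
    linarith
  have hMy : 0 < M * y := mul_pos hM hy
  generalize α + (1 - α) * y = D at key ⊢
  have hD : D ≠ 0 := by
    rintro rfl
    linarith
  have hD2 : 0 < D ^ 2 := by positivity
  have h : 2 * (α / D - M * y / D ^ 2 - 1) + 1 = (2 * α * D - 2 * M * y) / D ^ 2 - 1 := by
    field_simp
    ring
  rw [h]
  have := (le_div_iff₀ hD2).2 key
  linarith
end
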